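/- arXiv:1310.6004 — 3 statements merged into one kernel-verified Lean document; each statement's English description precedes it below -/
import Mathlib

section
/- Let M ∈ ℝ^{p×p} and α > 0. The affine variational inequality over the box [−α,α]^p (find z ∈ [−α,α]^p with (y − z)ᵀ(q + Mz) ≥ 0 for all y ∈ [−α,α]^p) has a unique solution for every q ∈ ℝ^p if and only if M is a P-matrix. -/
open Matrix

/-!
A point `z` solves the variational inequality over a box iff it solves it coordinatewise:
`0 ≤ (s - z i) * (q + M z) i` for every `s ∈ [-α, α]`. Call this system the box problem.

If `M` is a P-matrix, two solutions `z, z'` satisfy `(z - z') i * (M (z - z')) i ≤ 0` for all `i`,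
hence agree. Existence needs no fixed point theorem: it goes by induction on the dimension. Freeze
the first coordinate at `t ∈ [-α, α]`; the other coordinates then solve a box problem for a
principal submatrix, which is again a P-matrix, so they are given by a unique `z(t)`. The graph of
`t ↦ z(t)` is closed and the box is compact, so `z` is continuous, and so is the first coordinate
`g(t)` of `q + M (t, z(t))`. Either `0 ≤ g(-α)`, and `t = -α` works, or `g(α) ≤ 0`, and `t = α`
works, or `g` vanishes in between by the intermediate value theorem.

Conversely, if `x ≠ 0` satisfies `x i * (M x) i ≤ 0` for all `i`, rescale it to have entries in
`[-α, α]` and choose a vertex `v` of the box with `v i = -α` where `x i > 0`, `v i = α` where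
`x i < 0`, and, where `x i = 0`, `v i = α` or `v i = -α` according to whether
`0 ≤ (M x) i` or not. For `q = -M (v + x)`,
both `v` and `v + x` are solutions: the residual `q + M z` is `-M x` at `v` and `0` at `v + x`.
-/

/-- `M` reverses the sign of no nonzero vector. -/
def IsPMat {n : ℕ} (M : Matrix (Fin n) (Fin n) ℝ) : Prop :=
  ∀ x : Fin n → ℝ, (∀ i, x i * (M *ᵥ x) i ≤ 0) → x = 0

/-- `z` solves the affine variational inequality with data `M`, `q` over the box `[-α, α]^n`, in
its coordinatewise form. -/
def BoxSol {n : ℕ} (M : Matrix (Fin n) (Fin n) ℝ) (α : ℝ) (q z : Fin n → ℝ) : Prop :=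
  ∀ i, z i ∈ Set.Icc (-α) α ∧ ∀ s ∈ Set.Icc (-α) α, 0 ≤ (s - z i) * (q i + (M *ᵥ z) i)

lemma boxSol_iff {n : ℕ} (M : Matrix (Fin n) (Fin n) ℝ) (α : ℝ) (q z : Fin n → ℝ) :
    ((∀ i, z i ∈ Set.Icc (-α) α) ∧ ∀ y : Fin n → ℝ, (∀ i, y i ∈ Set.Icc (-α) α) →
      0 ≤ (y - z) ⬝ᵥ (q + M *ᵥ z)) ↔ BoxSol M α q z := by
  constructor
  · rintro ⟨hz, h⟩ i
    refine ⟨hz i, fun s hs => ?_⟩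
    have h1 := h (Function.update z i s) (fun j => by
      by_cases hj : j = i
      · subst hj; simpa using hs
      · simpa [Function.update_of_ne hj] using hz j)
    have h2 : Function.update z i s - z = Pi.single i (s - z i) := by
      ext j
      by_cases hj : j = i
      · subst hj; simp
      · simp [hj]
    rw [h2, single_dotProduct] at h1
    simpa using h1
  · intro h
    refine ⟨fun i => (h i).1, fun y hy => ?_⟩
    exact Finset.sum_nonneg fun i _ => (h i).2 (y i) (hy i)

lemma BoxSol.unique {n : ℕ} {M : Matrix (Fin n) (Fin n) ℝ} (hM : IsPMat M) {α : ℝ}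
    {q z z' : Fin n → ℝ} (h : BoxSol M α q z) (h' : BoxSol M α q z') : z = z' := by
  refine sub_eq_zero.1 (hM _ fun i => ?_)
  have h1 := (h i).2 _ (h' i).1
  have h2 := (h' i).2 _ (h i).1
  rw [mulVec_sub]
  simp only [Pi.sub_apply]
  linarith

lemma mulVec_cons_apply {n : ℕ} (M : Matrix (Fin (n + 1)) (Fin (n + 1)) ℝ) (t : ℝ)
    (z : Fin n → ℝ) (i : Fin (n + 1)) :
    (M *ᵥ (Fin.cons t z : Fin (n + 1) → ℝ)) i = M i 0 * t + ∑ j : Fin n, M i j.succ * z j := by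
  simp [mulVec, dotProduct, Fin.sum_univ_succ]

lemma IsPMat.submatrix_succ {n : ℕ} {M : Matrix (Fin (n + 1)) (Fin (n + 1)) ℝ} (hM : IsPMat M) :
    IsPMat (M.submatrix Fin.succ Fin.succ) := by
  intro x hx
  have h := hM (Fin.cons 0 x) (fun i => by
    rw [mulVec_cons_apply]
    refine Fin.cases (by simp) (fun i => ?_) i
    simpa [mulVec, dotProduct] using hx i)
  ext j
  simpa using congrFun h j.succ

/-- The topological closed graph theorem for maps into a compact space. -/
lemma continuous_of_closed_graph {X Y : Type*} [TopologicalSpace X] [TopologicalSpace Y]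
    [CompactSpace Y] {f : X → Y} (h : IsClosed {x : X × Y | x.2 = f x.1}) : Continuous f := by
  refine continuous_iff_isClosed.2 fun C hC => ?_
  have hpre : f ⁻¹' C = Prod.fst '' ({x : X × Y | x.2 = f x.1} ∩ Prod.snd ⁻¹' C) := by
    ext x
    constructor
    · intro hx
      exact ⟨(x, f x), ⟨rfl, hx⟩, rfl⟩
    · rintro ⟨⟨a, b⟩, ⟨hab, hb⟩, rfl⟩
      have hab' : b = f a := hab
      subst hab'
      exact hb
  rw [hpre]
  exact isClosedMap_fst_of_compactSpace _ (h.inter (hC.preimage continuous_snd))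

/-- The solution of the box problem depends continuously on `q`: its graph is closed and its
values lie in a compact box. -/
lemma continuous_boxSol {n : ℕ} {M : Matrix (Fin n) (Fin n) ℝ} (hM : IsPMat M) {α : ℝ}
    {Z : (Fin n → ℝ) → Fin n → ℝ} (hZ : ∀ q, BoxSol M α q (Z q)) : Continuous Z := by
  let K : Set (Fin n → ℝ) := Set.univ.pi fun _ => Set.Icc (-α) α
  have hK : IsCompact K := isCompact_univ_pi fun _ => isCompact_Icc
  have : CompactSpace K := isCompact_iff_compactSpace.1 hK
  let F : (Fin n → ℝ) → K := fun q => ⟨Z q, fun i _ => (hZ q i).1⟩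
  have hgraph : {x : (Fin n → ℝ) × K | x.2 = F x.1} =
      {x | ∀ i, ∀ s ∈ Set.Icc (-α) α,
        0 ≤ (s - x.2.1 i) * (x.1 i + ∑ j, M i j * x.2.1 j)} := by
    ext ⟨q, z, hz⟩
    constructor
    · intro h i s hs
      have h' : z = Z q := congrArg Subtype.val h
      subst h'
      exact (hZ q i).2 s hs
    · intro h
      apply Subtype.ext
      exact BoxSol.unique hM (fun i => ⟨hz i trivial, h i⟩) (hZ q)
  have hF : Continuous F := by
    apply continuous_of_closed_graph
    rw [show {x : (Fin n → ℝ) × K | x.2 = F x.1} = _ from hgraph]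
    simp only [Set.ofPred_forall]
    refine isClosed_iInter fun i => isClosed_iInter fun s => isClosed_iInter fun _ => ?_
    have hc : ∀ j, Continuous fun x : (Fin n → ℝ) × K => (x.2 : Fin n → ℝ) j := fun j =>
      (continuous_apply j).comp (continuous_subtype_val.comp continuous_snd)
    exact isClosed_le continuous_const ((continuous_const.sub (hc i)).mul
      (((continuous_apply i).comp continuous_fst).add
        (continuous_finsetSum _ fun j _ => continuous_const.mul (hc j))))
  exact continuous_subtype_val.comp hF

lemma exists_boxSol {α : ℝ} (hα : 0 < α) : ∀ {n : ℕ} {M : Matrix (Fin n) (Fin n) ℝ},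
    IsPMat M → ∀ q, ∃ z, BoxSol M α q z
  | 0, _, _, _ => ⟨0, fun i => i.elim0⟩
  | n + 1, M, hM, q => by
    have hM' := hM.submatrix_succ
    choose Z hZ using fun r => exists_boxSol hα hM' r
    have hZc := continuous_boxSol hM' hZ
    let z : ℝ → Fin n → ℝ := fun t => Z fun i => q i.succ + M i.succ 0 * t
    have hz : Continuous z := hZc.comp (by fun_prop)
    let g : ℝ → ℝ := fun t => q 0 + (M 0 0 * t + ∑ j, M 0 j.succ * z t j)
    have hg : Continuous g := by fun_prop
    -- Only the first coordinate of the box problem constrains `t`.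
    have key : ∀ t ∈ Set.Icc (-α) α, (∀ s ∈ Set.Icc (-α) α, 0 ≤ (s - t) * g t) →
        ∃ z, BoxSol M α q z := by
      intro t ht h
      refine ⟨Fin.cons t (z t), fun i => ?_⟩
      rw [mulVec_cons_apply]
      refine Fin.cases ⟨ht, h⟩ (fun i => ?_) i
      have := hZ (fun i => q i.succ + M i.succ 0 * t) i
      simpa [mulVec, dotProduct, add_assoc] using this
    by_cases h1 : 0 ≤ g (-α)
    · exact key (-α) ⟨le_rfl, by linarith⟩ fun s hs => mul_nonneg (by linarith [hs.1]) h1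
    by_cases h2 : g α ≤ 0
    · exact key α ⟨by linarith, le_rfl⟩ fun s hs =>
        mul_nonneg_of_nonpos_of_nonpos (by linarith [hs.2]) h2
    push Not at h1 h2
    obtain ⟨t, ht, h0⟩ := intermediate_value_Icc (by linarith : -α ≤ α) hg.continuousOn
      (show (0 : ℝ) ∈ Set.Icc (g (-α)) (g α) from ⟨h1.le, h2.le⟩)
    exact key t ht fun s _ => by simp [h0]

/-- Sign-reversed vectors with entries in `[-α, α]` vanish as soon as box problems have at most
one solution: otherwise a vertex `v` and its translate `v + x` solve the same problem. -/
lemma eq_zero_of_unique {n : ℕ} {M : Matrix (Fin n) (Fin n) ℝ} {α : ℝ} (hα : 0 < α)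
    (hU : ∀ q z z', BoxSol M α q z → BoxSol M α q z' → z = z') {x : Fin n → ℝ}
    (hx : ∀ i, x i * (M *ᵥ x) i ≤ 0) (hb : ∀ i, |x i| ≤ α) : x = 0 := by
  classical
  let v : Fin n → ℝ := fun i => if x i < 0 ∨ (x i = 0 ∧ 0 ≤ (M *ᵥ x) i) then α else -α
  have h := hU (-(M *ᵥ (v + x))) v (v + x) (fun i => ?_) (fun i => ?_)
  · simpa using h
  · have hq : (-(M *ᵥ (v + x))) i + (M *ᵥ v) i = -(M *ᵥ x) i := by
      rw [mulVec_add]; simp only [Pi.neg_apply, Pi.add_apply]; ring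
    rw [hq]
    by_cases hc : x i < 0 ∨ (x i = 0 ∧ 0 ≤ (M *ᵥ x) i)
    · have hv : v i = α := if_pos hc
      have hw : 0 ≤ (M *ᵥ x) i := by
        rcases hc with hc | hc
        · by_contra hn
          push Not at hn
          linarith [hx i, mul_pos_of_neg_of_neg hc hn]
        · exact hc.2
      rw [hv]
      exact ⟨⟨by linarith, le_rfl⟩, fun s hs =>
        mul_nonneg_of_nonpos_of_nonpos (by linarith [hs.2]) (by linarith)⟩
    · have hv : v i = -α := if_neg hc
      have hw : (M *ᵥ x) i ≤ 0 := by
        push Not at hc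
        rcases hc.1.eq_or_lt with h0 | h0
        · exact (hc.2 h0.symm).le
        · by_contra hn
          push Not at hn
          linarith [hx i, mul_pos h0 hn]
      rw [hv]
      exact ⟨⟨le_rfl, by linarith⟩, fun s hs => mul_nonneg (by linarith [hs.1]) (by linarith)⟩
  · have hq : (-(M *ᵥ (v + x))) i + (M *ᵥ (v + x)) i = 0 := by simp
    rw [hq]
    refine ⟨?_, fun s _ => by simp⟩
    have hbi := abs_le.1 (hb i)
    simp only [Pi.add_apply]
    by_cases hc : x i < 0 ∨ (x i = 0 ∧ 0 ≤ (M *ᵥ x) i)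
    · have hv : v i = α := if_pos hc
      have : x i ≤ 0 := hc.elim le_of_lt fun h => h.1.le
      rw [hv]
      constructor <;> linarith
    · have hv : v i = -α := if_neg hc
      have : 0 ≤ x i := not_lt.1 fun h => hc (Or.inl h)
      rw [hv]
      constructor <;> linarith

/-- the affine variational inequality over the box `[-α, α]^p`
has a unique solution for every `q ∈ ℝ^p` if and only if `M` is a `P`-matrix. -/
theorem avi_box_unique_solution_iff_P_matrix (p : ℕ)
    (M : Matrix (Fin p) (Fin p) ℝ) (α : ℝ) (hα : 0 < α) :
    (∀ q : Fin p → ℝ, ∃! z : Fin p → ℝ, (∀ i, z i ∈ Set.Icc (-α) α) ∧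
        ∀ y : Fin p → ℝ, (∀ i, y i ∈ Set.Icc (-α) α) →
          0 ≤ (y - z) ⬝ᵥ (q + M *ᵥ z)) ↔
      (∀ x : Fin p → ℝ, (∀ i, x i * (M *ᵥ x) i ≤ 0) → x = 0) := by
  simp only [boxSol_iff]
  constructor
  · intro h x hx
    by_contra hne
    have hpos : 0 < ‖x‖ := norm_pos_iff.2 hne
    have hc : 0 < α / ‖x‖ := div_pos hα hpos
    have h0 : (α / ‖x‖) • x = 0 := by
      refine eq_zero_of_unique hα (fun q z z' hz hz' => (h q).unique hz hz') (fun i => ?_)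
        fun i => ?_
      · rw [mulVec_smul]
        simp only [Pi.smul_apply, smul_eq_mul]
        nlinarith [mul_nonneg (mul_pos hc hc).le (neg_nonneg.2 (hx i))]
      · have hi : |x i| ≤ ‖x‖ := norm_le_pi_norm x i
        rw [Pi.smul_apply, smul_eq_mul, abs_mul, abs_of_pos hc]
        calc α / ‖x‖ * |x i| ≤ α / ‖x‖ * ‖x‖ := by gcongr
          _ = α := div_mul_cancel₀ _ hpos.ne'
    exact hne ((smul_eq_zero.1 h0).resolve_left hc.ne')
  · intro hM q
    obtain ⟨z, hz⟩ := exists_boxSol hα (M := M) hM q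
    exact ⟨z, hz, fun z' hz' => BoxSol.unique hM hz' hz⟩
end

section
/- Let M ∈ ℝ^{p×p} be symmetric positive-definite and α > 0. Consider σ, σ⁺, u ∈ ℝ^p with σ⁺ = σ + Mu and u ∈ −α·Sgn(σ⁺). Then for the Lyapunov function V(σ) = σᵀM⁻¹σ one has V(σ⁺) − V(σ) = −uᵀMu + 2uᵀσ⁺ ≤ 0; hence the equilibrium σ* = 0 of the dynamics σ_{k+1} = σ_k + Mu_k, u_k ∈ −α·Sgn(σ_{k+1}) is globally Lyapunov stable. -/
/-!
Positive definiteness makes `M` injective, hence invertible, so with `σ = σ⁺ - M u` the identity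
`V(σ⁺) - V(σ) = -uᵀMu + 2uᵀσ⁺` follows by expanding the quadratic form, `M⁻¹` being symmetric and
`M⁻¹ M u = u`. For the sign, `uᵀMu ≥ 0`, while each `uᵢ σ⁺ᵢ = -α vᵢ σ⁺ᵢ` is nonpositive, because
`v x = |x|` for every `v ∈ Sgn x`.
-/

open Matrix

/-- The set-valued sign function: `Sgn x = {1}` if `x > 0`, `{-1}` if `x < 0`,
and `[-1, 1]` if `x = 0`. -/
noncomputable def Sgn (x : ℝ) : Set ℝ :=
  if 0 < x then {1} else if x < 0 then {-1} else Set.Icc (-1) 1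

theorem Sgn.mul_nonneg {x v : ℝ} (hv : v ∈ Sgn x) : 0 ≤ v * x := by
  unfold Sgn at hv
  split_ifs at hv with h1 h2
  · rw [Set.mem_singleton_iff.1 hv]; linarith
  · rw [Set.mem_singleton_iff.1 hv]; linarith
  · simp [le_antisymm (not_lt.1 h1) (not_lt.1 h2)]

theorem isUnit_det_of_pos {p : ℕ} {M : Matrix (Fin p) (Fin p) ℝ}
    (hMpos : ∀ x : Fin p → ℝ, x ≠ 0 → 0 < x ⬝ᵥ (M *ᵥ x)) : IsUnit M.det := by
  rw [isUnit_iff_ne_zero]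
  intro h
  obtain ⟨x, hx, hMx⟩ := Matrix.exists_mulVec_eq_zero_iff.2 h
  simpa [hMx] using hMpos x hx

/-- for `M` symmetric positive-definite and the dynamics
`σ⁺ = σ + M u`, `u ∈ -α·Sgn(σ⁺)`, the Lyapunov function `V(σ) = σᵀ M⁻¹ σ` satisfies
`V(σ⁺) - V(σ) = -uᵀMu + 2uᵀσ⁺ ≤ 0`; hence the equilibrium `σ* = 0` is globally
Lyapunov stable. -/
theorem quadratic_lyapunov_decrease (p : ℕ) (M : Matrix (Fin p) (Fin p) ℝ)
    (hMsym : Mᵀ = M)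
    (hMpos : ∀ x : Fin p → ℝ, x ≠ 0 → 0 < x ⬝ᵥ (M *ᵥ x))
    (α : ℝ) (hα : 0 < α) (σ σplus u : Fin p → ℝ)
    (hdyn : σplus = σ + M *ᵥ u)
    (hu : ∀ i, ∃ v ∈ Sgn (σplus i), u i = -α * v) :
    σplus ⬝ᵥ (M⁻¹ *ᵥ σplus) - σ ⬝ᵥ (M⁻¹ *ᵥ σ)
        = -(u ⬝ᵥ (M *ᵥ u)) + 2 * (u ⬝ᵥ σplus) ∧
      σplus ⬝ᵥ (M⁻¹ *ᵥ σplus) - σ ⬝ᵥ (M⁻¹ *ᵥ σ) ≤ 0 := by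
  have hdet := isUnit_det_of_pos hMpos
  have hσ : σ = σplus - M *ᵥ u := by rw [hdyn]; simp
  have hinv : M⁻¹ *ᵥ (M *ᵥ u) = u := by
    rw [Matrix.mulVec_mulVec, Matrix.nonsing_inv_mul _ hdet, Matrix.one_mulVec]
  have hcross : (M *ᵥ u) ⬝ᵥ (M⁻¹ *ᵥ σplus) = u ⬝ᵥ σplus := by
    have hsymInv : (M⁻¹)ᵀ = M⁻¹ := by rw [Matrix.transpose_nonsing_inv, hMsym]
    rw [Matrix.dotProduct_mulVec, ← Matrix.mulVec_transpose, hsymInv, hinv]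
  have heq : σplus ⬝ᵥ (M⁻¹ *ᵥ σplus) - σ ⬝ᵥ (M⁻¹ *ᵥ σ)
      = -(u ⬝ᵥ (M *ᵥ u)) + 2 * (u ⬝ᵥ σplus) := by
    rw [hσ, Matrix.mulVec_sub, hinv, sub_dotProduct, dotProduct_sub, dotProduct_sub, hcross,
      dotProduct_comm σplus u, dotProduct_comm (M *ᵥ u) u]
    ring
  refine ⟨heq, ?_⟩
  have hquad : 0 ≤ u ⬝ᵥ (M *ᵥ u) := by
    rcases eq_or_ne u 0 with rfl | h
    · simp
    · exact (hMpos u h).le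
  have hsign : u ⬝ᵥ σplus ≤ 0 := by
    refine Finset.sum_nonpos fun i _ => ?_
    obtain ⟨v, hv, hui⟩ := hu i
    rw [hui]
    nlinarith [mul_nonneg hα.le (Sgn.mul_nonneg hv)]
  linarith
end

section
/- Let M ∈ ℝ^{p×p} be positive-definite (not necessarily symmetric) and α > 0. Let σ_k, σ_{k+1}, u_{k−1}, u_k ∈ ℝ^p satisfy σ_{k+1} = σ_k + Mu_k, u_{k−1} ∈ −α·Sgn(σ_k) and u_k ∈ −α·Sgn(σ_{k+1}). Then for the nonquadratic Lyapunov function V(σ_k) = −u_{k−1}ᵀσ_k one has V(σ_k) = α‖σ_k‖₁ ≥ 0 and V(σ_{k+1}) − V(σ_k) = −u_kᵀMu_k + ⟨u_{k−1} − u_k, σ_k⟩ ≤ 0; hence the equilibrium σ* = 0 is globally Lyapunov stable. -/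
/-!
Since `v * x = |x|` for `v ∈ Sgn x`, the Lyapunov function is `α ‖σ‖₁`. Substituting the dynamics
into `-(uk ⬝ᵥ σk1)` gives the increment formula. There the quadratic term is nonpositive by
positive-definiteness of `M`, and the cross term is nonpositive because `|v| ≤ 1` on every
`Sgn y`, so that `v * x ≤ |x|` for any `x`: the selection in `Sgn x` maximizes the pairing with `x`.
-/

open Matrix

theorem Sgn_mul_self {x v : ℝ} (hv : v ∈ Sgn x) : v * x = |x| := by
  unfold Sgn at hv
  split_ifs at hv with h1 h2
  · rw [Set.mem_singleton_iff.mp hv, abs_of_pos h1, one_mul]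
  · rw [Set.mem_singleton_iff.mp hv, abs_of_neg h2, neg_one_mul]
  · simp [le_antisymm (not_lt.mp h1) (not_lt.mp h2)]

theorem abs_le_one_of_mem_Sgn {x v : ℝ} (hv : v ∈ Sgn x) : |v| ≤ 1 := by
  unfold Sgn at hv
  split_ifs at hv with h1 h2
  · simp [Set.mem_singleton_iff.mp hv]
  · simp [Set.mem_singleton_iff.mp hv]
  · exact abs_le.mpr hv

/-- for `M` positive-definite (not necessarily symmetric) and the dynamics
`σ_{k+1} = σ_k + M u_k`, `u_{k-1} ∈ -α·Sgn(σ_k)`, `u_k ∈ -α·Sgn(σ_{k+1})`, the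
nonquadratic Lyapunov function `V(σ_k) = -u_{k-1}ᵀ σ_k` satisfies `V(σ_k) = α ‖σ_k‖₁ ≥ 0`
and `V(σ_{k+1}) - V(σ_k) = -u_kᵀ M u_k + ⟨u_{k-1} - u_k, σ_k⟩ ≤ 0`; hence the equilibrium
`σ* = 0` is globally Lyapunov stable. -/
theorem nonquadratic_lyapunov_decrease (p : ℕ) (M : Matrix (Fin p) (Fin p) ℝ)
    (hMpos : ∀ x : Fin p → ℝ, x ≠ 0 → 0 < x ⬝ᵥ (M *ᵥ x))
    (α : ℝ) (hα : 0 < α) (σk σk1 ukm uk : Fin p → ℝ)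
    (hdyn : σk1 = σk + M *ᵥ uk)
    (hukm : ∀ i, ∃ v ∈ Sgn (σk i), ukm i = -α * v)
    (huk : ∀ i, ∃ v ∈ Sgn (σk1 i), uk i = -α * v) :
    (-(ukm ⬝ᵥ σk) = α * ∑ i, |σk i| ∧ 0 ≤ -(ukm ⬝ᵥ σk)) ∧
      -(uk ⬝ᵥ σk1) - -(ukm ⬝ᵥ σk)
        = -(uk ⬝ᵥ (M *ᵥ uk)) + (ukm - uk) ⬝ᵥ σk ∧
      -(uk ⬝ᵥ σk1) - -(ukm ⬝ᵥ σk) ≤ 0 := by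
  have hV : -(ukm ⬝ᵥ σk) = α * ∑ i, |σk i| := by
    rw [dotProduct, ← Finset.sum_neg_distrib, Finset.mul_sum]
    refine Finset.sum_congr rfl fun i _ => ?_
    obtain ⟨v, hv, h⟩ := hukm i
    rw [h, ← Sgn_mul_self hv]
    ring
  have hcross : -(uk ⬝ᵥ σk) ≤ α * ∑ i, |σk i| := by
    rw [dotProduct, ← Finset.sum_neg_distrib, Finset.mul_sum]
    refine Finset.sum_le_sum fun i _ => ?_
    obtain ⟨v, hv, h⟩ := huk i
    have hle : v * σk i ≤ |σk i| := by
      calc v * σk i ≤ |v * σk i| := le_abs_self _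
        _ = |v| * |σk i| := abs_mul _ _
        _ ≤ |σk i| := mul_le_of_le_one_left (abs_nonneg _) (abs_le_one_of_mem_Sgn hv)
    rw [h]
    linarith [mul_le_mul_of_nonneg_left hle hα.le]
  have hquad : 0 ≤ uk ⬝ᵥ (M *ᵥ uk) := by
    by_cases h0 : uk = 0
    · simp [h0]
    · exact (hMpos uk h0).le
  have hdiff : -(uk ⬝ᵥ σk1) - -(ukm ⬝ᵥ σk)
      = -(uk ⬝ᵥ (M *ᵥ uk)) + (ukm - uk) ⬝ᵥ σk := by
    rw [hdyn, dotProduct_add, sub_dotProduct]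
    ring
  refine ⟨⟨hV, ?_⟩, hdiff, ?_⟩
  · rw [hV]
    positivity
  · rw [hdiff, sub_dotProduct]
    linarith
end
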